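/- Fix data points z₁,…,z_N ∈ ℝ^D, weights w₁,…,w_K > 0, means μ₁,…,μ_K ∈ ℝ^D and positive definite symmetric covariances Σ₁,…,Σ_K, and define the responsibilities γ_{n,k} as below. If for some index k the gradient of the Gaussian-mixture log-likelihood L with respect to Σ_k vanishes and Σ_{n=1}^N γ_{n,k} > 0, then Σ_k = ( Σ_{n=1}^N γ_{n,k} (z_n − μ_k)(z_n − μ_k)ᵀ ) / ( Σ_{n=1}^N γ_{n,k} ). -/

import Mathlib

/-! Every perturbation of the covariance `S = Σ_k` is taken in the form `S + t • (S * B * S)` with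
`B` symmetric; this reaches all symmetric directions, since `S` is invertible, and gives the
cleanest derivatives. Indeed `det (S + t S B S) = det S * det (1 + t B S)` has logarithmic
derivative `tr (B S)` at `t = 0`, and `(S + t S B S)⁻¹ - S⁻¹ = -t (S + t S B S)⁻¹ S B` shows that
`vᵀ S⁻¹ v` has derivative `-vᵀ B v`. Hence the density has derivative
`N(z; μ, S) * (vᵀ B v - tr (B S)) / 2` with `v = z - μ` (`hasDerivAt_gaussDensity_line`), and
stationarity of the log-likelihood says `∑ n, γ n k * (vₙᵀ B vₙ - tr (B S)) = 0`, that is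
`tr (B M) = 0` for `M = ∑ n, γ n k • vₙ vₙᵀ - (∑ n, γ n k) • S`. As `M` is itself symmetric,
`B = M` is admissible and `tr (M M) = 0` forces `M = 0`.

The log-likelihood is differentiable at positive definite `S` (`differentiableAt_gaussDensity`), so
its Fréchet derivative in the hypothesis is the true one, and it computes these derivatives along
lines. -/


open Matrix Real

attribute [local instance] Matrix.normedAddCommGroup Matrix.normedSpace

/-- The multivariate Gaussian density on `ℝ^D` with mean `μ` and covariance `S`:
`N(z; μ, S) = (2π)^{−D/2} (det S)^{−1/2} exp(−(1/2)(z − μ)ᵀ S⁻¹ (z − μ))`. -/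
noncomputable def gaussDensity {D : ℕ} (μ : Fin D → ℝ) (S : Matrix (Fin D) (Fin D) ℝ)
    (z : Fin D → ℝ) : ℝ :=
  (2 * π) ^ (-(D : ℝ) / 2) * S.det ^ (-(1 : ℝ) / 2) *
    Real.exp (-(1 / 2) * ((z - μ) ⬝ᵥ (S⁻¹ *ᵥ (z - μ))))

theorem differentiable_matrix_det {D : ℕ} :
    Differentiable ℝ (fun A : Matrix (Fin D) (Fin D) ℝ => A.det) := by
  simp only [Matrix.det_apply']
  fun_prop

theorem differentiable_matrix_adjugate_apply {D : ℕ} (i j : Fin D) :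
    Differentiable ℝ (fun A : Matrix (Fin D) (Fin D) ℝ => A.adjugate i j) := by
  simp only [Matrix.adjugate_apply, Matrix.det_apply']
  refine Differentiable.fun_sum fun σ _ => Differentiable.const_mul ?_ _
  have h (l : Fin D) : Differentiable ℝ
      (fun A : Matrix (Fin D) (Fin D) ℝ => A.updateRow j (Pi.single i 1) (σ l) l) := by
    by_cases h : σ l = j
    · simp [h]
    · simp only [Matrix.updateRow_apply, h, if_false]
      fun_prop
  fun_prop

theorem differentiableAt_matrix_inv_apply {D : ℕ} {S : Matrix (Fin D) (Fin D) ℝ}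
    (hS : S.det ≠ 0) (i j : Fin D) :
    DifferentiableAt ℝ (fun A : Matrix (Fin D) (Fin D) ℝ => A⁻¹ i j) S := by
  simp only [Matrix.inv_def, Matrix.smul_apply, Ring.inverse_eq_inv', smul_eq_mul]
  exact ((differentiable_matrix_det S).inv hS).mul (differentiable_matrix_adjugate_apply i j S)

theorem differentiableAt_bilin_inv {D : ℕ} {S : Matrix (Fin D) (Fin D) ℝ}
    (hS : S.det ≠ 0) (u v : Fin D → ℝ) :
    DifferentiableAt ℝ (fun A : Matrix (Fin D) (Fin D) ℝ => u ⬝ᵥ (A⁻¹ *ᵥ v)) S := by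
  simp only [dotProduct, Matrix.mulVec]
  exact DifferentiableAt.fun_sum fun i _ => DifferentiableAt.const_mul
    (DifferentiableAt.fun_sum fun j _ => (differentiableAt_matrix_inv_apply hS i j).mul_const _) _

theorem differentiableAt_gaussDensity {D : ℕ} {S : Matrix (Fin D) (Fin D) ℝ}
    (hS : S.det ≠ 0) (μ z : Fin D → ℝ) :
    DifferentiableAt ℝ (fun A : Matrix (Fin D) (Fin D) ℝ => gaussDensity μ A z) S := by
  unfold gaussDensity
  have h1 := (differentiable_matrix_det S).rpow_const (p := -(1 : ℝ) / 2) (Or.inl hS)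
  have h2 := differentiableAt_bilin_inv hS (z - μ) (z - μ)
  exact (h1.const_mul _).mul (h2.const_mul _).exp

theorem gaussDensity_pos {D : ℕ} {S : Matrix (Fin D) (Fin D) ℝ} (hS : S.PosDef)
    (μ z : Fin D → ℝ) : 0 < gaussDensity μ S z := by
  have := hS.det_pos
  unfold gaussDensity
  positivity

theorem hasDerivAt_line {D : ℕ} (S H : Matrix (Fin D) (Fin D) ℝ) :
    HasDerivAt (fun t : ℝ => S + t • H) H 0 := by
  refine (((hasDerivAt_id (0 : ℝ)).smul_const H).const_add S).congr_deriv ?_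
  exact one_smul ℝ H

/-- Jacobi's formula at `S`, in the direction `S * B * S`. -/
theorem hasDerivAt_det_line {D : ℕ} (S B : Matrix (Fin D) (Fin D) ℝ) :
    HasDerivAt (fun t : ℝ => (S + t • (S * B * S)).det) (S.det * (B * S).trace) 0 := by
  have h : (fun t : ℝ => (S + t • (S * B * S)).det) = fun t : ℝ => S.det *
      (1 + (B * S).trace * t +
        ((1 + (Polynomial.X : Polynomial ℝ) • (B * S).map Polynomial.C).det.divX.divX).eval t
          * t ^ 2) := by
    funext t
    rw [← Matrix.det_one_add_smul, ← Matrix.det_mul]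
    simp [mul_add, Matrix.mul_assoc]
  rw [h]
  have hp := ((1 + (Polynomial.X : Polynomial ℝ) • (B * S).map Polynomial.C).det.divX.divX).hasDerivAt
    (0 : ℝ)
  have := ((((hasDerivAt_id (0 : ℝ)).const_mul (B * S).trace).const_add 1).add
    (hp.mul ((hasDerivAt_id (0 : ℝ)).pow 2))).const_mul S.det
  refine this.congr_deriv ?_
  simp

theorem hasDerivAt_bilin_inv_line {D : ℕ} {S : Matrix (Fin D) (Fin D) ℝ} (hS : S.det ≠ 0)
    (B : Matrix (Fin D) (Fin D) ℝ) (u v : Fin D → ℝ) :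
    HasDerivAt (fun t : ℝ => u ⬝ᵥ ((S + t • (S * B * S))⁻¹ *ᵥ v)) (-(u ⬝ᵥ (B *ᵥ v))) 0 := by
  have hdet : ∀ᶠ t : ℝ in nhds 0, (S + t • (S * B * S)).det ≠ 0 :=
    (hasDerivAt_det_line S B).continuousAt.eventually_ne (by simpa using hS)
  have hSu : IsUnit S.det := hS.isUnit
  -- The resolvent identity: the increment is `t` times a function differentiable at `0`.
  have hev : (fun t : ℝ => u ⬝ᵥ ((S + t • (S * B * S))⁻¹ *ᵥ v)) =ᶠ[nhds 0] fun t : ℝ =>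
      u ⬝ᵥ (S⁻¹ *ᵥ v) - t * (u ⬝ᵥ ((S + t • (S * B * S))⁻¹ *ᵥ ((S * B) *ᵥ v))) := by
    filter_upwards [hdet] with t ht
    have key : (S + t • (S * B * S))⁻¹ = S⁻¹ - t • ((S + t • (S * B * S))⁻¹ * (S * B)) := by
      have h1 : (S + t • (S * B * S)) * S⁻¹ = 1 + t • (S * B) := by
        rw [add_mul, Matrix.mul_nonsing_inv _ hSu, Matrix.smul_mul,
          Matrix.mul_nonsing_inv_cancel_right _ _ hSu]
      have h2 := congrArg (fun X => (S + t • (S * B * S))⁻¹ * X) h1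
      simp only [Matrix.nonsing_inv_mul_cancel_left _ _ ht.isUnit, mul_add, mul_one,
        Matrix.mul_smul] at h2
      rw [h2]; abel
    conv_lhs => rw [key]
    simp [Matrix.sub_mulVec, dotProduct_sub, Matrix.smul_mulVec]
  have hS0 : (S + (0 : ℝ) • (S * B * S)).det ≠ 0 := by simpa using hS
  have hd := ((differentiableAt_bilin_inv hS0 u ((S * B) *ᵥ v)).comp (0 : ℝ)
    (hasDerivAt_line S (S * B * S)).differentiableAt).hasDerivAt
  have := ((hasDerivAt_id (0 : ℝ)).mul hd).const_sub (u ⬝ᵥ (S⁻¹ *ᵥ v))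
  refine (this.congr_of_eventuallyEq hev).congr_deriv ?_
  simp [Matrix.nonsing_inv_mul_cancel_left _ _ hSu]

theorem hasDerivAt_gaussDensity_line {D : ℕ} {S : Matrix (Fin D) (Fin D) ℝ} (hS : 0 < S.det)
    (B : Matrix (Fin D) (Fin D) ℝ) (μ z : Fin D → ℝ) :
    HasDerivAt (fun t : ℝ => gaussDensity μ (S + t • (S * B * S)) z)
      (gaussDensity μ S z * (((z - μ) ⬝ᵥ (B *ᵥ (z - μ)) - (B * S).trace) / 2)) 0 := by
  unfold gaussDensity
  have h1 := (hasDerivAt_det_line S B).rpow_const (p := -(1 : ℝ) / 2)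
    (Or.inl (by simpa using hS.ne'))
  have h2 := (hasDerivAt_bilin_inv_line hS.ne' B (z - μ) (z - μ)).const_mul (-(1 / 2 : ℝ))
  refine ((h1.const_mul ((2 * π) ^ (-(D : ℝ) / 2))).mul h2.exp).congr_deriv ?_
  simp only [zero_smul, add_zero]
  rw [Real.rpow_sub_one hS.ne']
  field_simp
  ring

/-- **Lemma 2 of the paper (EM covariance-update equation).**
Fix data points `z₁,…,z_N ∈ ℝ^D`, weights `w₁,…,w_K > 0`, means `μ₁,…,μ_K ∈ ℝ^D` and
positive definite symmetric covariances `Σ₁,…,Σ_K`, with responsibilities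
`γ_{n,k} = w_k N(z_n; μ_k, Σ_k) / ∑_j w_j N(z_n; μ_j, Σ_j)`.  If for some index `k` the
gradient of the Gaussian-mixture log-likelihood `L` with respect to `Σ_k` (tested against
symmetric directions) vanishes and `∑_n γ_{n,k} > 0`, then
`Σ_k = (∑_n γ_{n,k} (z_n − μ_k)(z_n − μ_k)ᵀ) / (∑_n γ_{n,k})`. -/
theorem em_cov_update (D N K : ℕ)
    (z : Fin N → Fin D → ℝ) (w : Fin K → ℝ) (hw : ∀ k, 0 < w k)
    (μ : Fin K → Fin D → ℝ) (S : Fin K → Matrix (Fin D) (Fin D) ℝ)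
    (hS : ∀ k, (S k).PosDef)
    (γ : Fin N → Fin K → ℝ)
    (hγ : ∀ n k, γ n k = w k * gaussDensity (μ k) (S k) (z n) /
        ∑ j, w j * gaussDensity (μ j) (S j) (z n))
    (k : Fin K)
    (L : Matrix (Fin D) (Fin D) ℝ → ℝ)
    (hL : L = fun A => ∑ n, Real.log
        (∑ j, w j * gaussDensity (μ j) (Function.update S k A j) (z n)))
    (hstat : ∀ H : Matrix (Fin D) (Fin D) ℝ, H.IsSymm → fderiv ℝ L (S k) H = 0)
    (hpos : 0 < ∑ n, γ n k) :
    S k = (∑ n, γ n k)⁻¹ • ∑ n, γ n k • Matrix.vecMulVec (z n - μ k) (z n - μ k) := by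
  have hdet : (S k).det ≠ 0 := (hS k).det_pos.ne'
  have hQ : ∀ n, 0 < ∑ j, w j * gaussDensity (μ j) (S j) (z n) := fun n =>
    Finset.sum_pos (fun j _ => mul_pos (hw j) (gaussDensity_pos (hS j) _ _)) ⟨k, Finset.mem_univ k⟩
  have hdiff : DifferentiableAt ℝ L (S k) := by
    rw [hL]
    refine DifferentiableAt.fun_sum fun n _ => DifferentiableAt.log ?_ ?_
    · refine DifferentiableAt.fun_sum fun j _ => DifferentiableAt.const_mul ?_ _
      by_cases h : j = k
      · subst h
        simp only [Function.update_self]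
        exact differentiableAt_gaussDensity hdet (μ j) (z n)
      · simp [Function.update_of_ne h]
    · simpa using (hQ n).ne'
  have hsymS : (S k)ᵀ = S k := by
    have := (hS k).isHermitian
    rwa [Matrix.IsHermitian, Matrix.conjTranspose_eq_transpose_of_trivial] at this
  -- Stationarity along the direction `S k * B * S k`.
  have hB : ∀ B : Matrix (Fin D) (Fin D) ℝ, B.IsSymm →
      ∑ n, γ n k * ((z n - μ k) ⬝ᵥ (B *ᵥ (z n - μ k)) - (B * S k).trace) = 0 := by
    intro B hBs
    have hsym : (S k * B * S k).IsSymm := by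
      simp [Matrix.IsSymm, Matrix.transpose_mul, hsymS, hBs.eq, Matrix.mul_assoc]
    have hdiff0 : HasFDerivAt L (fderiv ℝ L (S k)) (S k + (0 : ℝ) • (S k * B * S k)) := by
      simpa using hdiff.hasFDerivAt
    have e1 := (hdiff0.comp_hasDerivAt (0 : ℝ)
      (hasDerivAt_line (S k) (S k * B * S k))).congr_deriv (hstat _ hsym)
    have e2 : HasDerivAt (fun t : ℝ => L (S k + t • (S k * B * S k)))
        (∑ n, γ n k * (((z n - μ k) ⬝ᵥ (B *ᵥ (z n - μ k)) - (B * S k).trace) / 2)) 0 := by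
      rw [hL]
      refine HasDerivAt.fun_sum fun n _ => ?_
      have e3 : HasDerivAt (fun t : ℝ => ∑ j, w j * gaussDensity (μ j)
          (Function.update S k (S k + t • (S k * B * S k)) j) (z n))
          (∑ j, if j = k then w k * (gaussDensity (μ k) (S k) (z n) *
            (((z n - μ k) ⬝ᵥ (B *ᵥ (z n - μ k)) - (B * S k).trace) / 2)) else 0) 0 := by
        refine HasDerivAt.fun_sum fun j _ => ?_
        by_cases h : j = k
        · subst h
          simpa using (hasDerivAt_gaussDensity_line (hS j).det_pos B (μ j) (z n)).const_mul (w j)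
        · simpa [Function.update_of_ne h, h] using hasDerivAt_const (0 : ℝ) _
      refine (e3.log (by simpa using (hQ n).ne')).congr_deriv ?_
      rw [hγ]
      simp only [Finset.sum_ite_eq', Finset.mem_univ, if_true, zero_smul, add_zero,
        Function.update_eq_self]
      ring
    have e4 := e2.unique e1
    simp only [← mul_div_assoc] at e4
    rw [← Finset.sum_div] at e4
    linarith
  set M : Matrix (Fin D) (Fin D) ℝ :=
    ∑ n, γ n k • Matrix.vecMulVec (z n - μ k) (z n - μ k) - (∑ n, γ n k) • S k with hM
  have hMs : Mᵀ = M := by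
    simp [hM, Matrix.transpose_sub, Matrix.transpose_sum, Matrix.transpose_smul,
      Matrix.transpose_vecMulVec, hsymS]
  have htr : (M * M).trace = 0 := by
    rw [← hB M hMs]
    have : M * M = M * (∑ n, γ n k • Matrix.vecMulVec (z n - μ k) (z n - μ k)
        - (∑ n, γ n k) • S k) := by rw [← hM]
    rw [this, mul_sub, Matrix.trace_sub, Finset.mul_sum, Matrix.trace_sum]
    simp only [Matrix.mul_smul, Matrix.trace_smul, Matrix.mul_vecMulVec, Matrix.trace_vecMulVec,
      mul_sub, Finset.sum_sub_distrib, Finset.sum_mul, smul_eq_mul, dotProduct_comm (M *ᵥ _)]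
  have hM0 : M = 0 := by
    refine Matrix.trace_conjTranspose_mul_self_eq_zero_iff.mp ?_
    rw [Matrix.conjTranspose_eq_transpose_of_trivial, hMs, htr]
  rw [sub_eq_zero.mp (hM.symm.trans hM0), smul_smul, inv_mul_cancel₀ hpos.ne', one_smul]
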